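/- Let m ≥ 1 and consider, for t ∈ ℂ with |t| → 0, the m solutions of R_m(z) = e^t, i.e. the zeros of P_m(z) − e^t P_m(−z). The zeros of M_m(0,z) = P_m(z) − P_m(−z) are z = 0 together with conjugate pairs ±i r_ℓ, r_ℓ ∈ ℝ∖{0}, ℓ = 1,…,⌈m/2⌉−1. The solutions satisfy: ẑ_1(t,0) = t + O(t^{2m+1}); for each ℓ, ẑ_{2ℓ}(t,0) = i r_ℓ + δ_ℓ t + O(t²) and ẑ_{2ℓ+1}(t,0) = −i r_ℓ + δ_ℓ t + O(t²) with the SAME real constant δ_ℓ > 1 for both members of the pair. If m is odd, these account for all m solutions; if m is even, the remaining solution satisfies ẑ_m(t,0) = D_m/t + O(1) with the constant D_m = p_0/Π_ℓ r_ℓ² > 0. -/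

import Mathlib

/-! STATEMENT 10: description of the `m` solutions of `R_m(z) = e^t` as `|t| → 0`:
zeros of `M_m(0,·)` are `0` and conjugate pairs `±i r_ℓ`, `ℓ = 1,…,⌈m/2⌉−1`;
`ẑ_1(t,0) = t + O(t^{2m+1})`; each pair gives `±i r_ℓ + δ_ℓ t + O(t²)` with the SAME
real `δ_ℓ > 1`; for even `m` the remaining solution is `D_m/t + O(1)` with
`D_m = p_0/Π r_ℓ² > 0`. -/

open Finset Complex Topology Asymptotics Polynomial

/-- `p_j = (2m−j)!/(j!(m−j)!)`, the coefficients of the Padé numerator `P_m`. -/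
noncomputable def pcoef (m j : ℕ) : ℂ :=
  ((2 * m - j).factorial : ℂ) / ((j.factorial : ℂ) * ((m - j).factorial : ℂ))

/-- The numerator `P_m` of the `(m,m)`-Padé approximant of the exponential. -/
noncomputable def Pgauss (m : ℕ) (z : ℂ) : ℂ :=
  ∑ j ∈ Finset.range (m + 1), pcoef m j * z ^ j

/-- The stability function `R_m = P_m(z)/P_m(−z)` of the m-stage Gauss method. -/
noncomputable def Rgauss (m : ℕ) (z : ℂ) : ℂ := Pgauss m z / Pgauss m (-z)

/-- `M_m(θ,z) = P_m(z) − e^{iθ}P_m(−z)` as a polynomial in `z`. -/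
noncomputable def MgaussPoly (m : ℕ) (θ : ℝ) : Polynomial ℂ :=
  ∑ j ∈ Finset.range (m + 1),
    Polynomial.C (pcoef m j * (1 + (-1) ^ (j + 1) * Complex.exp ((θ : ℂ) * Complex.I)))
      * Polynomial.X ^ j

/-- `P_m(z) − w·P_m(−z)` as a polynomial in `z`; its roots are the solutions of
`R_m(z) = w`. -/
noncomputable def QPade (m : ℕ) (w : ℂ) : Polynomial ℂ :=
  ∑ j ∈ Finset.range (m + 1),
    Polynomial.C (pcoef m j * (1 - (-1) ^ j * w)) * Polynomial.X ^ j

/-!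
Write `R = R_m`. The Wronskian identity `P(z) P(-z) - (-z²)^m` for the pair `P(-z)`, `P(z)` gives
`R'(z)/R(z) = 1 - (-z²)^m / (P(z) P(-z))`. Moreover `P(z) P(-z) = G(-z²)` with `G` monic of degree
`m` and with positive coefficients, so on the imaginary axis `|P(iy)|² > y^{2m}`: there `R'/R` is
real, in `(0, 1)` for `y ≠ 0` and equal to `1` at `0`, and even in `y`.

The polynomials `P_m(z) - P_m(-z)` satisfy a three-term recurrence whose continued fraction maps
the right half plane to itself, so their zeros are purely imaginary; they are simple as `R' ≠ 0`
there. The inverse function theorem continues each zero `iy` to an analytic solution of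
`R(z) = e^t` with slope `R(iy)/R'(iy)`, which is the constant `δ_ℓ`. A degree count shows that at
most one solution is left over; it is recovered from the product of all the solutions.
-/

/-! ### The Padé numerator and denominator -/

/-- The polynomials `∑ j ≤ m, (2m-j)!/j! · φ(m-j) · X^j`. The choice `φ d = 1/d!` gives the Padé
numerator `P_m`, and `φ d = (2d choose d)` gives the polynomial `G_m` with
`P_m(z) P_m(-z) = G_m(-z²)`; all these families satisfy `derivative_weightedBessel_succ`. -/
noncomputable def weightedBessel {K : Type*} [Field K] (φ : ℕ → K) (m : ℕ) : K[X] :=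
  ∑ j ∈ Finset.range (m + 1), C (((2 * m - j).factorial : K) / j.factorial * φ (m - j)) * X ^ j

section WeightedBessel

variable {K : Type*} [Field K] (φ : ℕ → K)

lemma coeff_weightedBessel (m j : ℕ) :
    (weightedBessel φ m).coeff j =
      if j ≤ m then ((2 * m - j).factorial : K) / j.factorial * φ (m - j) else 0 := by
  simp only [weightedBessel, finsetSum_coeff, coeff_C_mul_X_pow, Finset.sum_ite_eq,
    Finset.mem_range, Nat.lt_succ_iff]

variable [CharZero K]

lemma succ_mul_coeff_weightedBessel_succ (m j : ℕ) :
    (j + 1) * (weightedBessel φ (m + 1)).coeff (j + 1) =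
      (2 * m + 1 - j) * (weightedBessel φ m).coeff j := by
  rcases le_or_gt j m with hj | hj
  · obtain ⟨d, rfl⟩ := Nat.exists_eq_add_of_le hj
    have hj0 : (j.factorial : K) ≠ 0 := by exact_mod_cast j.factorial_ne_zero
    have hj1 : (j + 1 : K) ≠ 0 := by exact_mod_cast j.succ_ne_zero
    rw [coeff_weightedBessel, coeff_weightedBessel, if_pos (by lia), if_pos hj,
      show 2 * (j + d + 1) - (j + 1) = j + 2 * d + 1 by lia,
      show j + d + 1 - (j + 1) = j + d - j by lia,
      show 2 * (j + d) - j = j + 2 * d by lia, Nat.factorial_succ, Nat.factorial_succ]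
    push_cast
    field_simp
    ring
  · simp [coeff_weightedBessel, hj.not_ge]

lemma derivative_weightedBessel_succ (m : ℕ) :
    derivative (weightedBessel φ (m + 1)) =
      (2 * (m : K[X]) + 1) * weightedBessel φ m - X * derivative (weightedBessel φ m) := by
  ext j
  have hX : (X * derivative (weightedBessel φ m)).coeff j = j * (weightedBessel φ m).coeff j := by
    cases j with
    | zero => simp
    | succ j => rw [coeff_X_mul, coeff_derivative]; push_cast; ring
  have hC : (2 * (m : K[X]) + 1) = C (2 * m + 1 : K) := by
    simp only [map_add, map_mul, map_ofNat, map_natCast, map_one]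
  rw [coeff_derivative, coeff_sub, hC, coeff_C_mul, hX]
  linear_combination succ_mul_coeff_weightedBessel_succ φ m j

end WeightedBessel

/-- The Padé numerator `P_m` as a polynomial. -/
noncomputable def padeNum : ℕ → ℂ[X] :=
  weightedBessel fun d => (d.factorial : ℂ)⁻¹

lemma coeff_padeNum (m j : ℕ) : (padeNum m).coeff j = if j ≤ m then pcoef m j else 0 := by
  simp only [padeNum, coeff_weightedBessel, pcoef, div_eq_mul_inv, mul_inv, mul_assoc]

lemma eval_padeNum (m : ℕ) (z : ℂ) : (padeNum m).eval z = Pgauss m z := by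
  simp only [padeNum, weightedBessel, eval_finsetSum, eval_C_mul, eval_pow, eval_X, Pgauss, pcoef,
    div_eq_mul_inv, mul_inv, mul_assoc]

lemma Pgauss_zero_right (m : ℕ) : Pgauss m 0 = (2 * m).factorial / m.factorial := by
  rw [← eval_padeNum, ← coeff_zero_eq_eval_zero]
  simp [coeff_padeNum, pcoef]

lemma derivative_padeNum_succ (m : ℕ) :
    derivative (padeNum (m + 1)) =
      (2 * (m : ℂ[X]) + 1) * padeNum m - X * derivative (padeNum m) :=
  derivative_weightedBessel_succ _ m

lemma mul_coeff_padeNum_succ (m j : ℕ) :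
    (2 * m - j) * (j + 1) * (padeNum m).coeff (j + 1) = (m - j) * (padeNum m).coeff j := by
  rcases lt_trichotomy j m with hj | rfl | hj
  · obtain ⟨d, rfl⟩ := Nat.exists_eq_add_of_lt hj
    have hj0 : (j.factorial : ℂ) ≠ 0 := by exact_mod_cast j.factorial_ne_zero
    have hd0 : (d.factorial : ℂ) ≠ 0 := by exact_mod_cast d.factorial_ne_zero
    have hj1 : (j + 1 : ℂ) ≠ 0 := by exact_mod_cast j.succ_ne_zero
    have hd1 : (d + 1 : ℂ) ≠ 0 := by exact_mod_cast d.succ_ne_zero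
    rw [coeff_padeNum, coeff_padeNum, if_pos (by lia), if_pos (by lia), pcoef, pcoef,
      show 2 * (j + d + 1) - j = j + 2 * d + 1 + 1 by lia,
      show 2 * (j + d + 1) - (j + 1) = j + 2 * d + 1 by lia,
      show j + d + 1 - j = d + 1 by lia, show j + d + 1 - (j + 1) = d by lia,
      Nat.factorial_succ j, Nat.factorial_succ d, Nat.factorial_succ (j + 2 * d + 1)]
    push_cast
    field_simp
    ring
  · simp [coeff_padeNum]
  · simp [coeff_padeNum, hj.not_ge, show ¬ j + 1 ≤ m by lia]

lemma padeNum_succ (m : ℕ) :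
    padeNum (m + 1) =
      (2 * (2 * (m : ℂ[X]) + 1) + X) * padeNum m - 2 * X * derivative (padeNum m) := by
  ext j
  have hC : (2 * (2 * (m : ℂ[X]) + 1) + X) * padeNum m - 2 * X * derivative (padeNum m) =
      C (2 * (2 * m + 1) : ℂ) * padeNum m + X * (padeNum m - C 2 * derivative (padeNum m)) := by
    simp only [map_add, map_mul, map_ofNat, map_natCast, map_one]
    ring
  rw [hC, coeff_add, coeff_C_mul]
  cases j with
  | zero =>
    simp only [coeff_padeNum, pcoef, Nat.zero_le, if_true, mul_coeff_zero, coeff_X_zero, zero_mul,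
      add_zero, Nat.sub_zero, Nat.factorial_zero, mul_add, mul_one, Nat.factorial_succ]
    push_cast
    field_simp [m.factorial_ne_zero]
    ring
  | succ j =>
    rw [coeff_X_mul, coeff_sub, coeff_C_mul, coeff_derivative]
    have hj : (j + 1 : ℂ) ≠ 0 := by exact_mod_cast j.succ_ne_zero
    have hA : (j + 1) * (padeNum (m + 1)).coeff (j + 1) = (2 * m + 1 - j) * (padeNum m).coeff j :=
      succ_mul_coeff_weightedBessel_succ _ m j
    refine mul_left_cancel₀ hj ?_
    linear_combination hA - 2 * mul_coeff_padeNum_succ m j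

lemma two_mul_derivative_padeNum_succ (m : ℕ) :
    2 * derivative (padeNum (m + 1)) = padeNum (m + 1) - X * padeNum m := by
  linear_combination 2 * derivative_padeNum_succ m - padeNum_succ m

lemma padeNum_add_two (m : ℕ) :
    padeNum (m + 2) = 2 * (2 * (m : ℂ[X]) + 3) * padeNum (m + 1) + X ^ 2 * padeNum m := by
  have h := padeNum_succ (m + 1)
  push_cast at h
  linear_combination h - X * two_mul_derivative_padeNum_succ m

/-- The Padé denominator `P_m(-z)`. -/
noncomputable def padeDen (m : ℕ) : ℂ[X] :=
  (padeNum m).comp (-X)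

lemma eval_padeDen (m : ℕ) (z : ℂ) : (padeDen m).eval z = Pgauss m (-z) := by
  rw [padeDen, eval_comp, eval_neg, eval_X, eval_padeNum]

lemma derivative_padeDen_succ (m : ℕ) :
    derivative (padeDen (m + 1)) =
      X * derivative (padeDen m) - (2 * (m : ℂ[X]) + 1) * padeDen m := by
  have h := congrArg (fun p : ℂ[X] => p.comp (-X)) (derivative_padeNum_succ m)
  simp only [padeDen, derivative_comp, derivative_neg, derivative_X, sub_comp, mul_comp, add_comp,
    ofNat_comp, natCast_comp, one_comp, X_comp] at h ⊢
  linear_combination -h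

lemma padeDen_succ (m : ℕ) :
    padeDen (m + 1) =
      (2 * (2 * (m : ℂ[X]) + 1) - X) * padeDen m - 2 * X * derivative (padeDen m) := by
  have h := congrArg (fun p : ℂ[X] => p.comp (-X)) (padeNum_succ m)
  simp only [padeDen, derivative_comp, derivative_neg, derivative_X, sub_comp, mul_comp, add_comp,
    ofNat_comp, natCast_comp, one_comp, X_comp] at h ⊢
  linear_combination h

lemma padeDen_add_two (m : ℕ) :
    padeDen (m + 2) = 2 * (2 * (m : ℂ[X]) + 3) * padeDen (m + 1) + X ^ 2 * padeDen m := by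
  have h := congrArg (fun p : ℂ[X] => p.comp (-X)) (padeNum_add_two m)
  simp only [padeDen, mul_comp, add_comp, pow_comp, ofNat_comp, natCast_comp, X_comp] at h ⊢
  linear_combination h

lemma padeNum_zero : padeNum 0 = 1 := by
  simp [padeNum, weightedBessel]

lemma padeDen_zero : padeDen 0 = 1 := by
  simp [padeDen, padeNum_zero]

lemma wronskian_pade (m : ℕ) :
    wronskian (padeDen m) (padeNum m) = padeNum m * padeDen m - (-X ^ 2) ^ m := by
  induction m with
  | zero => simp [wronskian, padeNum_zero, padeDen_zero]
  | succ m ih =>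
    rw [wronskian] at ih ⊢
    rw [derivative_padeNum_succ, derivative_padeDen_succ, padeNum_succ, padeDen_succ]
    linear_combination (-X ^ 2) * ih

lemma eq_of_derivative_eq_of_coeff_zero_eq {K : Type*} [Field K] [CharZero K] {p q : K[X]}
    (h : derivative p = derivative q) (h0 : p.coeff 0 = q.coeff 0) : p = q := by
  have hd : (p - q).natDegree = 0 := derivative_eq_zero.mp (by simp [h])
  rw [← sub_eq_zero, eq_C_of_natDegree_eq_zero hd]
  simp [h0]

lemma padeNum_mul_padeDen (m : ℕ) :
    padeNum m * padeDen m =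
      (weightedBessel (fun d => (d.centralBinom : ℂ)) m).comp (-X ^ 2) := by
  induction m with
  | zero => simp [padeNum_zero, padeDen_zero, weightedBessel]
  | succ m ih =>
    set G := weightedBessel (fun d => (d.centralBinom : ℂ)) with hG
    apply eq_of_derivative_eq_of_coeff_zero_eq
    · have hprod : derivative (padeNum (m + 1) * padeDen (m + 1)) =
          X ^ 2 * derivative (padeNum m * padeDen m)
            - 2 * (2 * (m : ℂ[X]) + 1) * X * (padeNum m * padeDen m) := by
        rw [derivative_mul, derivative_mul, derivative_padeNum_succ, derivative_padeDen_succ,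
          padeNum_succ, padeDen_succ]
        ring
      have hcomp : derivative ((G (m + 1)).comp (-X ^ 2)) =
          X ^ 2 * derivative ((G m).comp (-X ^ 2))
            - 2 * (2 * (m : ℂ[X]) + 1) * X * (G m).comp (-X ^ 2) := by
        rw [derivative_comp, derivative_comp, hG, derivative_weightedBessel_succ]
        simp only [derivative_neg, derivative_X_sq, sub_comp, mul_comp, add_comp, natCast_comp,
          ofNat_comp, one_comp, X_comp, map_ofNat]
        push_cast
        ring
      rw [hprod, hcomp, ih]
    · have hchoose : ((2 * (m + 1)).factorial / (m + 1).factorial : ℂ) ^ 2 =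
          (2 * (m + 1)).factorial * (m + 1).centralBinom := by
        rw [Nat.centralBinom, Nat.cast_choose ℂ (by lia), two_mul, Nat.add_sub_cancel]
        ring
      rw [coeff_zero_eq_eval_zero, coeff_zero_eq_eval_zero, eval_mul, eval_padeNum, eval_padeDen,
        neg_zero, Pgauss_zero_right, ← sq, hchoose, eval_comp]
      simp [← coeff_zero_eq_eval_zero, coeff_weightedBessel, hG]

/-! ### The stability function on the imaginary axis -/

section ImaginaryAxis

open scoped ComplexConjugate

lemma Pgauss_conj (m : ℕ) (z : ℂ) : Pgauss m (conj z) = conj (Pgauss m z) := by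
  simp [Pgauss, pcoef]

lemma Pgauss_neg_mul_I (m : ℕ) (y : ℝ) : Pgauss m (-(y * I)) = conj (Pgauss m (y * I)) := by
  rw [← Pgauss_conj, map_mul, conj_I, conj_ofReal, mul_neg]

lemma normSq_Pgauss_mul_I (m : ℕ) (y : ℝ) :
    normSq (Pgauss m (y * I)) = ∑ j ∈ Finset.range (m + 1),
      ((2 * m - j).factorial : ℝ) / j.factorial * (m - j).centralBinom * (y ^ 2) ^ j := by
  have h := congrArg (eval (y * I)) (padeNum_mul_padeDen m)
  have hsq : -(y * I) ^ 2 = (y : ℂ) ^ 2 := by rw [mul_pow, I_sq]; ring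
  rw [eval_mul, eval_padeNum, eval_padeDen, Pgauss_neg_mul_I, mul_conj, eval_comp, weightedBessel,
    eval_finsetSum] at h
  simp only [eval_mul, eval_C, eval_pow, eval_X, eval_neg, hsq] at h
  apply ofReal_injective
  push_cast at h ⊢
  exact h

lemma pow_lt_normSq_Pgauss_mul_I {m : ℕ} (hm : m ≠ 0) (y : ℝ) :
    y ^ (2 * m) < normSq (Pgauss m (y * I)) := by
  rw [normSq_Pgauss_mul_I, Finset.sum_range_succ]
  have hlast : ((2 * m - m).factorial : ℝ) / m.factorial * (m - m).centralBinom * (y ^ 2) ^ m =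
      y ^ (2 * m) := by
    rw [show 2 * m - m = m by lia, div_self (by positivity), Nat.sub_self, pow_mul]
    simp
  rw [hlast, lt_add_iff_pos_left]
  refine Finset.sum_pos' (fun j _ => by positivity) ⟨0, by simpa using hm.bot_lt, ?_⟩
  have := m.centralBinom_pos
  simp only [Nat.sub_zero, pow_zero]
  positivity

lemma Pgauss_mul_I_ne_zero {m : ℕ} (hm : m ≠ 0) (y : ℝ) : Pgauss m (y * I) ≠ 0 := by
  rw [← normSq_pos]
  exact (Even.pow_nonneg (even_two_mul m) y).trans_lt (pow_lt_normSq_Pgauss_mul_I hm y)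

lemma Pgauss_neg_mul_I_ne_zero {m : ℕ} (hm : m ≠ 0) (y : ℝ) : Pgauss m (-(y * I)) ≠ 0 := by
  simpa using Pgauss_mul_I_ne_zero hm (-y)

/-- The logarithmic derivative of `R_m` at `iy`, which is real; see `hasDerivAt_Rgauss` and
`ofReal_gaussRate`. -/
noncomputable def gaussRate (m : ℕ) (y : ℝ) : ℝ :=
  1 - y ^ (2 * m) / normSq (Pgauss m (y * I))

lemma gaussRate_pos {m : ℕ} (hm : m ≠ 0) (y : ℝ) : 0 < gaussRate m y := by
  have hP := pow_lt_normSq_Pgauss_mul_I hm y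
  rw [gaussRate, sub_pos, div_lt_one (normSq_pos.mpr (Pgauss_mul_I_ne_zero hm y))]
  exact hP

lemma gaussRate_lt_one {m : ℕ} (hm : m ≠ 0) {y : ℝ} (hy : y ≠ 0) : gaussRate m y < 1 := by
  have hP := normSq_pos.mpr (Pgauss_mul_I_ne_zero hm y)
  have : 0 < y ^ (2 * m) := (even_two_mul m).pow_pos hy
  rw [gaussRate, sub_lt_self_iff]
  positivity

lemma gaussRate_neg (m : ℕ) (y : ℝ) : gaussRate m (-y) = gaussRate m y := by
  rw [gaussRate, gaussRate, (even_two_mul m).neg_pow, ofReal_neg, neg_mul, Pgauss_neg_mul_I,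
    normSq_conj]

lemma gaussRate_zero {m : ℕ} (hm : m ≠ 0) : gaussRate m 0 = 1 := by
  simp [gaussRate, hm]

lemma analyticAt_Pgauss (m : ℕ) (z : ℂ) : AnalyticAt ℂ (Pgauss m) z := by
  unfold Pgauss
  fun_prop

lemma analyticAt_Rgauss {m : ℕ} {z : ℂ} (hD : Pgauss m (-z) ≠ 0) :
    AnalyticAt ℂ (Rgauss m) z :=
  (analyticAt_Pgauss m z).fun_div ((analyticAt_Pgauss m (-z)).fun_comp (by fun_prop)) hD

lemma hasDerivAt_Rgauss {m : ℕ} {z : ℂ} (hP : Pgauss m z ≠ 0) (hD : Pgauss m (-z) ≠ 0) :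
    HasDerivAt (Rgauss m)
      (Rgauss m z * (1 - (-z ^ 2) ^ m / (Pgauss m z * Pgauss m (-z)))) z := by
  have hW := congrArg (eval z) (wronskian_pade m)
  simp only [wronskian, eval_sub, eval_mul, eval_pow, eval_neg, eval_X] at hW
  rw [← eval_padeNum] at hP ⊢
  rw [← eval_padeDen] at hD ⊢
  have hR : Rgauss m = fun z => (padeNum m).eval z / (padeDen m).eval z := by
    simp only [funext_iff, Rgauss, eval_padeNum, eval_padeDen, implies_true]
  rw [hR]
  refine (((padeNum m).hasDerivAt z).div ((padeDen m).hasDerivAt z) hD).congr_deriv ?_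
  field_simp
  linear_combination hW

lemma ofReal_gaussRate (m : ℕ) (y : ℝ) :
    (gaussRate m y : ℂ) =
      1 - (-(y * I) ^ 2) ^ m / (Pgauss m (y * I) * Pgauss m (-(y * I))) := by
  have hsq : -(y * I) ^ 2 = (y : ℂ) ^ 2 := by rw [mul_pow, I_sq]; ring
  rw [hsq, Pgauss_neg_mul_I, mul_conj, ← pow_mul, gaussRate]
  push_cast
  rfl

end ImaginaryAxis

/-! ### The zeros of `P_m(z) - P_m(-z)` -/

lemma pcoef_ne_zero (m j : ℕ) : pcoef m j ≠ 0 :=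
  div_ne_zero (Nat.cast_ne_zero.mpr (Nat.factorial_ne_zero _))
    (mul_ne_zero (Nat.cast_ne_zero.mpr (Nat.factorial_ne_zero _))
      (Nat.cast_ne_zero.mpr (Nat.factorial_ne_zero _)))

lemma coeff_QPade (m j : ℕ) (w : ℂ) :
    (QPade m w).coeff j = if j ≤ m then pcoef m j * (1 - (-1) ^ j * w) else 0 := by
  simp only [QPade, finsetSum_coeff, coeff_C_mul_X_pow, Finset.sum_ite_eq, Finset.mem_range,
    Nat.lt_succ_iff]

lemma QPade_eq_padeNum_sub (m : ℕ) (w : ℂ) : QPade m w = padeNum m - C w * padeDen m := by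
  ext j
  rw [coeff_QPade, coeff_sub, coeff_C_mul, padeDen, show (-X : ℂ[X]) = C (-1) * X by simp,
    comp_C_mul_X_coeff, coeff_padeNum]
  split_ifs <;> ring

lemma eval_QPade (m : ℕ) (w z : ℂ) : (QPade m w).eval z = Pgauss m z - w * Pgauss m (-z) := by
  rw [QPade_eq_padeNum_sub, eval_sub, eval_C_mul, eval_padeNum, eval_padeDen]

lemma MgaussPoly_zero_right (m : ℕ) : MgaussPoly m 0 = QPade m 1 := by
  simp only [MgaussPoly, QPade, ofReal_zero, zero_mul, Complex.exp_zero, pow_succ, mul_neg, mul_one,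
    ← sub_eq_add_neg]

lemma natDegree_QPade {m : ℕ} {w : ℂ} (h : 1 - (-1) ^ m * w ≠ 0) :
    (QPade m w).natDegree = m := by
  refine natDegree_eq_of_le_of_coeff_ne_zero (natDegree_le_iff_coeff_eq_zero.mpr fun j hj => ?_) ?_
  · rw [coeff_QPade, if_neg hj.not_ge]
  · rw [coeff_QPade, if_pos le_rfl]
    exact mul_ne_zero (pcoef_ne_zero m m) h

lemma natDegree_QPade_one {m : ℕ} (hm : m ≠ 0) :
    (QPade m 1).natDegree = 2 * ((m + 1) / 2 - 1) + 1 := by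
  rcases m.even_or_odd with ⟨n, rfl⟩ | ⟨n, rfl⟩
  · have hodd : Odd (2 * ((n + n + 1) / 2 - 1) + 1) := odd_two_mul_add_one _
    refine natDegree_eq_of_le_of_coeff_ne_zero
      (natDegree_le_iff_coeff_eq_zero.mpr fun j hj => ?_) ?_
    · rw [coeff_QPade]
      split_ifs with hjn
      · rw [show j = n + n by lia, Even.neg_one_pow ⟨n, rfl⟩]
        simp
      · rfl
    · rw [coeff_QPade, if_pos (by lia), hodd.neg_one_pow]
      exact mul_ne_zero (pcoef_ne_zero _ _) (by norm_num)
  · rw [natDegree_QPade (by rw [(odd_two_mul_add_one n).neg_one_pow]; norm_num)]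
    lia

lemma QPade_one_ne_zero {m : ℕ} (hm : m ≠ 0) : QPade m 1 ≠ 0 :=
  ne_zero_of_natDegree_gt (n := 0) (by rw [natDegree_QPade_one hm]; lia)

lemma mem_roots_QPade_one {m : ℕ} (hm : m ≠ 0) {z : ℂ} :
    z ∈ (QPade m 1).roots ↔ Pgauss m z = Pgauss m (-z) := by
  rw [mem_roots (QPade_one_ne_zero hm), IsRoot, eval_QPade, one_mul, sub_eq_zero]

lemma neg_mem_roots_QPade_one {m : ℕ} (hm : m ≠ 0) {z : ℂ} (hz : z ∈ (QPade m 1).roots) :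
    -z ∈ (QPade m 1).roots := by
  rw [mem_roots_QPade_one hm] at hz ⊢
  rw [neg_neg, hz]

lemma QPade_add_two (m : ℕ) (w : ℂ) :
    QPade (m + 2) w = C (2 * (2 * m + 3) : ℂ) * QPade (m + 1) w + X ^ 2 * QPade m w := by
  have hC : C (2 * (2 * m + 3) : ℂ) = 2 * (2 * (m : ℂ[X]) + 3) := by
    simp only [map_add, map_mul, map_ofNat, map_natCast]
  rw [QPade_eq_padeNum_sub, QPade_eq_padeNum_sub, QPade_eq_padeNum_sub, hC, padeNum_add_two,
    padeDen_add_two]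
  ring

-- The ratios `w_k = a (k + 2) / (z a (k + 1))` satisfy `w_{k+1} = c (k + 1) / z + 1 / w_k`, hence
-- stay in the open right half plane.
lemma ne_zero_of_three_term_recurrence {a : ℕ → ℂ} {c : ℕ → ℝ} {z : ℂ} (hz : 0 < z.re)
    (hc : ∀ k, 0 < c k) (h0 : a 0 = 0) (h1 : a 1 ≠ 0)
    (hrec : ∀ k, a (k + 2) = c k * a (k + 1) + z ^ 2 * a k) (k : ℕ) : a (k + 1) ≠ 0 := by
  have hz0 : z ≠ 0 := by rintro rfl; simp at hz
  have hre_inv {w : ℂ} (hw : 0 < w.re) : 0 < (w⁻¹).re := by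
    rw [inv_re]
    exact div_pos hw (normSq_pos.mpr (by rintro rfl; simp at hw))
  suffices hratio : 0 < (a (k + 2) / (z * a (k + 1))).re by
    intro h
    simp [h] at hratio
  induction k with
  | zero =>
    have : a 2 / (z * a 1) = c 0 * z⁻¹ := by rw [hrec 0, h0]; field_simp; ring
    rw [this, re_ofReal_mul]
    exact mul_pos (hc 0) (hre_inv hz)
  | succ k ih =>
    have hk : a (k + 2) ≠ 0 := by intro h; simp [h] at ih
    have : a (k + 3) / (z * a (k + 2)) = c (k + 1) * z⁻¹ + (a (k + 2) / (z * a (k + 1)))⁻¹ := by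
      rw [hrec (k + 1)]
      field_simp
    rw [this, add_re, re_ofReal_mul]
    exact add_pos (mul_pos (hc _) (hre_inv hz)) (hre_inv ih)

lemma re_nonpos_of_mem_roots_QPade_one {m : ℕ} (hm : m ≠ 0) {z : ℂ}
    (hz : z ∈ (QPade m 1).roots) : z.re ≤ 0 := by
  by_contra! hre
  obtain ⟨k, rfl⟩ := Nat.exists_eq_succ_of_ne_zero hm
  refine ne_zero_of_three_term_recurrence (a := fun k => (QPade k 1).eval z)
    (c := fun k => 2 * (2 * k + 3)) hre (fun k => by positivity) ?_ ?_ (fun k => ?_) k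
    (isRoot_of_mem_roots hz)
  · simp [QPade]
  · have hz0 : z ≠ 0 := by rintro rfl; simp at hre
    have hev : (QPade 1 1).eval z = 2 * z := by
      simp [eval_QPade, Pgauss, pcoef, Finset.sum_range_succ]
      ring
    rw [hev]
    exact mul_ne_zero two_ne_zero hz0
  · simp only [QPade_add_two, eval_add, eval_mul, eval_C, eval_pow, eval_X]
    push_cast
    rfl

lemma exists_eq_mul_I_of_mem_roots_QPade_one {m : ℕ} (hm : m ≠ 0) {z : ℂ}
    (hz : z ∈ (QPade m 1).roots) : ∃ y : ℝ, z = y * I := by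
  have h1 := re_nonpos_of_mem_roots_QPade_one hm hz
  have h2 := re_nonpos_of_mem_roots_QPade_one hm (neg_mem_roots_QPade_one hm hz)
  rw [neg_re] at h2
  exact ⟨z.im, Complex.ext (by rw [re_ofReal_mul, I_re]; linarith) (by simp)⟩

lemma nodup_roots_QPade_one {m : ℕ} (hm : m ≠ 0) : (QPade m 1).roots.Nodup := by
  rw [Multiset.nodup_iff_count_le_one]
  intro z
  rw [count_roots]
  by_contra! hlt
  obtain ⟨hz, hz'⟩ := (one_lt_rootMultiplicity_iff_isRoot (QPade_one_ne_zero hm)).mp hlt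
  rw [← mem_roots (QPade_one_ne_zero hm)] at hz
  obtain ⟨y, rfl⟩ := exists_eq_mul_I_of_mem_roots_QPade_one hm hz
  rw [mem_roots_QPade_one hm] at hz
  have hder : (derivative (padeNum m)).eval (y * I) = (derivative (padeDen m)).eval (y * I) := by
    simpa [IsRoot, QPade_eq_padeNum_sub, sub_eq_zero] using hz'
  have hsq : -(y * I) ^ 2 = (y : ℂ) ^ 2 := by rw [mul_pow, I_sq]; ring
  have hW : (0 : ℂ) = normSq (Pgauss m (y * I)) - y ^ (2 * m) := by
    have h := congrArg (eval (y * I)) (wronskian_pade m)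
    simp only [wronskian, eval_sub, eval_mul, eval_pow, eval_neg, eval_X, eval_padeNum,
      eval_padeDen, hder, hsq, Pgauss_neg_mul_I, mul_conj, ← pow_mul] at h
    rw [← h, ← Pgauss_neg_mul_I, ← hz]
    ring
  have hlt := pow_lt_normSq_Pgauss_mul_I hm y
  exact hlt.ne' (sub_eq_zero.mp (by exact_mod_cast hW.symm))

/-- The conjugate pairs `±i r_ℓ`, the nonzero zeros of `M_m(0,·)`, listed as in the theorem. -/
noncomputable def conjPairs {k : ℕ} (r : Fin k → ℝ) : Multiset ℂ :=
  Multiset.map (fun ℓ => (r ℓ : ℂ) * I) Finset.univ.val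
    + Multiset.map (fun ℓ => -((r ℓ : ℂ) * I)) Finset.univ.val

lemma map_conjPairs {α : Type*} {k : ℕ} (f : ℂ → α) (r : Fin k → ℝ) :
    (conjPairs r).map f = Multiset.map (fun ℓ => f (r ℓ * I)) Finset.univ.val
      + Multiset.map (fun ℓ => f (-(r ℓ * I))) Finset.univ.val := by
  rw [conjPairs, Multiset.map_add, Multiset.map_map, Multiset.map_map]
  rfl

lemma prod_conjPairs {k : ℕ} (r : Fin k → ℝ) :
    (conjPairs r).prod = ((∏ ℓ, r ℓ ^ 2 : ℝ) : ℂ) := by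
  rw [conjPairs, Multiset.prod_add, ← Finset.prod_eq_multiset_prod,
    ← Finset.prod_eq_multiset_prod, ← Finset.prod_mul_distrib, ofReal_prod]
  refine Finset.prod_congr rfl fun ℓ _ => ?_
  rw [mul_neg, mul_mul_mul_comm, I_mul_I, mul_neg_one, neg_neg, ofReal_pow, sq]

lemma eq_zero_cons_map_add_map_neg {s : Multiset ℂ} {T : Finset ℝ} (hs : s.Nodup)
    (him : ∀ z ∈ s, ∃ y : ℝ, z = y * I) (hneg : ∀ z ∈ s, -z ∈ s) (h0 : 0 ∈ s)
    (hT : ∀ y : ℝ, y ∈ T ↔ (y * I : ℂ) ∈ s ∧ 0 < y) :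
    s = 0 ::ₘ (T.val.map (fun y : ℝ => (y * I : ℂ)) + T.val.map fun y : ℝ => -(y * I : ℂ)) := by
  have hinj : Function.Injective fun y : ℝ => (y * I : ℂ) := fun x y h => by simpa using h
  refine (Multiset.Nodup.ext hs ?_).mpr fun z => ?_
  · rw [Multiset.nodup_cons, Multiset.nodup_add]
    refine ⟨?_, T.nodup.map hinj, T.nodup.map (neg_injective.comp hinj), ?_⟩
    · simp only [Multiset.mem_add, Multiset.mem_map, Finset.mem_val, hT]
      rintro (⟨y, ⟨-, hy⟩, h⟩ | ⟨y, ⟨-, hy⟩, h⟩) <;> simp [hy.ne'] at h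
    · rw [Multiset.disjoint_left]
      simp only [Multiset.mem_map, Finset.mem_val, hT]
      rintro _ ⟨y, ⟨-, hy⟩, rfl⟩ ⟨x, ⟨-, hx⟩, h⟩
      have : -x = y := by simpa using congrArg im h
      linarith
  · simp only [Multiset.mem_cons, Multiset.mem_add, Multiset.mem_map, Finset.mem_val, hT]
    constructor
    · intro hz
      obtain ⟨y, rfl⟩ := him z hz
      rcases lt_trichotomy y 0 with hy | rfl | hy
      · exact .inr (.inr ⟨-y, ⟨by simpa using hneg _ hz, by simpa using hy⟩, by simp⟩)
      · exact .inl (by simp)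
      · exact .inr (.inl ⟨y, ⟨hz, hy⟩, rfl⟩)
    · rintro (rfl | ⟨y, ⟨hy, -⟩, rfl⟩ | ⟨y, ⟨hy, -⟩, rfl⟩)
      exacts [h0, hy, hneg _ hy]

lemma exists_eq_zero_cons_conjPairs {s : Multiset ℂ} {k : ℕ} (hs : s.Nodup)
    (him : ∀ z ∈ s, ∃ y : ℝ, z = y * I) (hneg : ∀ z ∈ s, -z ∈ s) (h0 : 0 ∈ s)
    (hcard : s.card = 2 * k + 1) :
    ∃ r : Fin k → ℝ, (∀ ℓ, 0 < r ℓ) ∧ s = 0 ::ₘ conjPairs r := by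
  set T : Finset ℝ := (s.map im).toFinset.filter (0 < ·) with hT
  have hmem (y : ℝ) : y ∈ T ↔ (y * I : ℂ) ∈ s ∧ 0 < y := by
    simp only [hT, Finset.mem_filter, Multiset.mem_toFinset, Multiset.mem_map]
    refine and_congr_left fun _ => ⟨?_, fun h => ⟨y * I, h, by simp⟩⟩
    rintro ⟨z, hz, rfl⟩
    obtain ⟨y, rfl⟩ := him z hz
    simpa using hz
  have hsT := eq_zero_cons_map_add_map_neg hs him hneg h0 hmem
  have hTcard : T.card = k := by
    have h := congrArg Multiset.card hsT
    simp only [hcard, Multiset.card_cons, Multiset.card_add, Multiset.card_map,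
      Finset.card_val] at h
    lia
  refine ⟨T.orderEmbOfFin hTcard,
    fun ℓ => ((hmem _).mp (T.orderEmbOfFin_mem hTcard ℓ)).2, ?_⟩
  have hTval : T.val = Finset.univ.val.map (T.orderEmbOfFin hTcard) :=
    congrArg Finset.val (T.map_orderEmbOfFin_univ hTcard).symm
  rw [hsT, hTval, Multiset.map_map, Multiset.map_map]
  rfl

lemma exists_roots_QPade_one_eq {m : ℕ} (hm : m ≠ 0) :
    ∃ r : Fin ((m + 1) / 2 - 1) → ℝ, (∀ ℓ, 0 < r ℓ) ∧ (QPade m 1).roots = 0 ::ₘ conjPairs r :=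
  exists_eq_zero_cons_conjPairs (nodup_roots_QPade_one hm)
    (fun _ => exists_eq_mul_I_of_mem_roots_QPade_one hm)
    (fun _ => neg_mem_roots_QPade_one hm) ((mem_roots_QPade_one hm).mpr (by rw [neg_zero]))
    (by rw [IsAlgClosed.card_roots_eq_natDegree, natDegree_QPade_one hm])

/-! ### Analytic branches of solutions -/

lemma exists_analyticAt_comp_eventuallyEq {𝕜 : Type*} [RCLike 𝕜] {f g : 𝕜 → 𝕜} {a b : 𝕜}
    (hf : AnalyticAt 𝕜 f a) (hf' : deriv f a ≠ 0) (hg : AnalyticAt 𝕜 g b) (hgb : g b = f a) :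
    ∃ z : 𝕜 → 𝕜, AnalyticAt 𝕜 z b ∧ z b = a ∧ f ∘ z =ᶠ[𝓝 b] g := by
  refine ⟨hf.hasStrictDerivAt.localInverse f _ a hf' ∘ g, ?_, ?_, ?_⟩
  · exact AnalyticAt.comp (by rw [hgb]; exact hf.analyticAt_localInverse hf') hg
  · rw [Function.comp_apply, hgb]
    exact (hf.hasStrictDerivAt.hasStrictFDerivAt_equiv hf').localInverse_apply_image
  · have h := hg.continuousAt.tendsto
    rw [hgb] at h
    exact h.eventually (hf.hasStrictDerivAt.eventually_right_inverse hf')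

lemma isBigO_pow_of_le_analyticOrderAt {𝕜 E : Type*} [NontriviallyNormedField 𝕜]
    [NormedAddCommGroup E] [NormedSpace 𝕜 E] {f : 𝕜 → E} {a : 𝕜} {n : ℕ}
    (hf : AnalyticAt 𝕜 f a) (hn : n ≤ analyticOrderAt f a) :
    f =O[𝓝 a] fun t => (t - a) ^ n := by
  obtain ⟨g, hg, hfg⟩ := (natCast_le_analyticOrderAt hf).mp hn
  have h := (isBigO_refl (fun t : 𝕜 => (t - a) ^ n) (𝓝 a)).smul
    (hg.continuousAt.tendsto.isBigO_one (F := 𝕜))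
  exact h.congr' (hfg.mono fun _ ht => ht.symm) (by simp)

/-- An analytic solution `z` of `R_m(z(t)) = e^t` near `t = 0` that starts at `z(0) = ζ`. -/
structure IsRootBranch (m : ℕ) (ζ : ℂ) (z : ℂ → ℂ) : Prop where
  analyticAt : AnalyticAt ℂ z 0
  apply_zero : z 0 = ζ
  eventuallyEq : Rgauss m ∘ z =ᶠ[𝓝 0] Complex.exp

lemma Rgauss_eq_one_of_mem_roots {m : ℕ} (hm : m ≠ 0) {y : ℝ}
    (hy : (y * I : ℂ) ∈ (QPade m 1).roots) : Rgauss m (y * I) = 1 := by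
  rw [mem_roots_QPade_one hm] at hy
  rw [Rgauss, hy, div_self (Pgauss_neg_mul_I_ne_zero hm y)]

lemma exists_isRootBranch {m : ℕ} (hm : m ≠ 0) {ζ : ℂ} (hζ : ζ ∈ (QPade m 1).roots) :
    ∃ z, IsRootBranch m ζ z := by
  obtain ⟨y, rfl⟩ := exists_eq_mul_I_of_mem_roots_QPade_one hm hζ
  have hP := Pgauss_mul_I_ne_zero hm y
  have hD := Pgauss_neg_mul_I_ne_zero hm y
  have hR := Rgauss_eq_one_of_mem_roots hm hζ
  have hR' : deriv (Rgauss m) (y * I) ≠ 0 := by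
    rw [(hasDerivAt_Rgauss hP hD).deriv, hR, one_mul, ← ofReal_gaussRate, ofReal_ne_zero]
    exact (gaussRate_pos hm y).ne'
  obtain ⟨z, hz, hz0, hRz⟩ := exists_analyticAt_comp_eventuallyEq (analyticAt_Rgauss hD) hR'
    (analyticAt_cexp (z := 0)) (by rw [hR, Complex.exp_zero])
  exact ⟨z, hz, hz0, hRz⟩

namespace IsRootBranch

variable {m : ℕ} {ζ : ℂ} {y : ℝ} {z : ℂ → ℂ}

lemma eventually_deriv_mul (hz : IsRootBranch m ζ z) :
    ∀ᶠ t in 𝓝 0, Pgauss m (z t) ≠ 0 ∧ Pgauss m (-z t) ≠ 0 ∧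
      deriv z t * (1 - (-z t ^ 2) ^ m / (Pgauss m (z t) * Pgauss m (-z t))) = 1 := by
  filter_upwards [hz.eventuallyEq, hz.eventuallyEq.deriv, hz.analyticAt.eventually_analyticAt]
    with t ht ht' hzt
  have hR : Rgauss m (z t) ≠ 0 := ht.trans_ne (exp_ne_zero t)
  obtain ⟨hP, hD⟩ := div_ne_zero_iff.mp hR
  refine ⟨hP, hD, mul_left_cancel₀ hR ?_⟩
  rw [((hasDerivAt_Rgauss hP hD).comp t hzt.differentiableAt.hasDerivAt).deriv, Complex.deriv_exp,
    ← ht, Function.comp_apply] at ht'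
  linear_combination ht'

lemma deriv_zero (hz : IsRootBranch m (y * I) z) : deriv z 0 = (gaussRate m y : ℂ)⁻¹ := by
  have h := hz.eventually_deriv_mul.self_of_nhds.2.2
  rw [hz.apply_zero, ← ofReal_gaussRate] at h
  exact eq_inv_of_mul_eq_one_left h

lemma isBigO_sub (hz : IsRootBranch m (y * I) z) :
    (fun t => z t - (y * I + ((gaussRate m y)⁻¹ : ℝ) * t)) =O[𝓝 0] fun t => t ^ 2 := by
  set u : ℂ → ℂ := fun t => z t - (y * I + ((gaussRate m y)⁻¹ : ℝ) * t) with hu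
  have hua : AnalyticAt ℂ u 0 := hz.analyticAt.sub (by fun_prop)
  have hu0 : u 0 = 0 := by simp [hu, hz.apply_zero]
  have hu' : deriv u 0 = 0 := by
    have hlin : HasDerivAt (fun t : ℂ => y * I + ((gaussRate m y)⁻¹ : ℝ) * t)
        ((gaussRate m y)⁻¹ : ℝ) 0 := by
      simpa using ((hasDerivAt_id (0 : ℂ)).const_mul _).const_add (y * I : ℂ)
    have hd : HasDerivAt u (deriv z 0 - ((gaussRate m y)⁻¹ : ℝ)) 0 :=
      hz.analyticAt.differentiableAt.hasDerivAt.sub hlin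
    rw [hd.deriv, hz.deriv_zero, ofReal_inv, sub_self]
  have hord : ((1 : ℕ) : ℕ∞) ≤ analyticOrderAt (deriv u) 0 := by
    rw [Nat.cast_one, Order.one_le_iff_ne_zero, analyticOrderAt_ne_zero]
    exact ⟨hua.deriv, hu'⟩
  simpa using isBigO_pow_of_le_analyticOrderAt (n := 2) hua
    ((analyticOrderAt_deriv_ge_iff hua hu0).mp hord)

-- Differentiating `R_m(z) = e^t` gives `z' - 1 = z' (-z²)^m / (P_m(z) P_m(-z))`, which vanishes
-- to order `2m`.
lemma isBigO_sub_id (hz : IsRootBranch m 0 z) :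
    (fun t => z t - t) =O[𝓝 0] fun t => t ^ (2 * m + 1) := by
  have hza := hz.analyticAt
  set g : ℂ → ℂ := fun t => (-1) ^ m * deriv z t / (Pgauss m (z t) * Pgauss m (-z t)) with hg
  obtain ⟨hP, hD, -⟩ := hz.eventually_deriv_mul.self_of_nhds
  have hga : AnalyticAt ℂ g 0 :=
    (analyticAt_const.mul hza.deriv).div (((analyticAt_Pgauss m _).comp hza).mul
      ((analyticAt_Pgauss m _).comp hza.neg)) (mul_ne_zero hP hD)
  have hua : AnalyticAt ℂ (fun t => z t - t) 0 := hza.sub analyticAt_id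
  have hu' : deriv (fun t => z t - t) =ᶠ[𝓝 0] z ^ (2 * m) * g := by
    filter_upwards [hz.eventually_deriv_mul, hza.eventually_analyticAt] with t ht hzt
    have hd : HasDerivAt (fun t => z t - t) (deriv z t - 1) t :=
      hzt.differentiableAt.hasDerivAt.sub (hasDerivAt_id t)
    rw [hd.deriv, ← ht.2.2, Pi.mul_apply, Pi.pow_apply, hg, neg_pow (z t ^ 2), ← pow_mul]
    ring
  have hord : ((2 * m : ℕ) : ℕ∞) ≤ analyticOrderAt (deriv fun t => z t - t) 0 := by
    have hz1 : 1 ≤ analyticOrderAt z 0 :=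
      Order.one_le_iff_ne_zero.mpr (analyticOrderAt_ne_zero.mpr ⟨hza, hz.apply_zero⟩)
    rw [analyticOrderAt_congr hu', analyticOrderAt_mul (hza.pow _) hga, analyticOrderAt_pow hza]
    refine le_add_right ?_
    simpa using nsmul_le_nsmul_right hz1 (2 * m)
  simpa using isBigO_pow_of_le_analyticOrderAt (n := 2 * m + 1) hua
    ((analyticOrderAt_deriv_ge_iff hua (by simp [hz.apply_zero])).mp hord)

end IsRootBranch

/-! ### All solutions near `t = 0` -/

lemma eventually_map_le_roots {K ι : Type*} [CommRing K] [IsDomain K] [TopologicalSpace K]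
    [T2Space K] {l : Filter ι} {s : Multiset K} (hs : s.Nodup) {Z : K → ι → K} {Q : ι → K[X]}
    (hZ : ∀ ζ ∈ s, Filter.Tendsto (Z ζ) l (𝓝 ζ)) (hQ : ∀ᶠ t in l, Q t ≠ 0)
    (hroot : ∀ ζ ∈ s, ∀ᶠ t in l, (Q t).IsRoot (Z ζ t)) :
    ∀ᶠ t in l, s.map (Z · t) ≤ (Q t).roots := by
  classical
  have hinj : ∀ᶠ t in l, ∀ a ∈ s.toFinset, ∀ b ∈ s.toFinset, a ≠ b → Z a t ≠ Z b t := by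
    simp only [Filter.eventually_all_finset, Filter.eventually_imp_distrib_left]
    intro a ha b hb hab
    have htendsto := (hZ a (Multiset.mem_toFinset.mp ha)).prodMk_nhds
      (hZ b (Multiset.mem_toFinset.mp hb))
    exact htendsto.eventually (isClosed_diagonal.isOpen_compl.mem_nhds hab)
  have hall : ∀ᶠ t in l, ∀ ζ ∈ s.toFinset, (Q t).IsRoot (Z ζ t) :=
    (Filter.eventually_all_finset _).mpr fun ζ hζ => hroot ζ (Multiset.mem_toFinset.mp hζ)
  filter_upwards [hinj, hall, hQ] with t hinj hall hQ
  simp only [Multiset.mem_toFinset] at hinj hall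
  rw [Multiset.le_iff_subset (hs.map_on fun a ha b hb h => not_imp_not.mp (hinj a ha b hb) h)]
  intro w hw
  obtain ⟨ζ, hζ, rfl⟩ := Multiset.mem_map.mp hw
  exact (mem_roots hQ).mpr (hall ζ hζ)

lemma eventually_exp_ne_one : ∀ᶠ t in 𝓝[≠] (0 : ℂ), Complex.exp t ≠ 1 := by
  simpa using (Complex.hasDerivAt_exp 0).eventually_ne (exp_ne_zero 0)

lemma QPade_ne_zero {m : ℕ} {w : ℂ} (hw : w ≠ 1) : QPade m w ≠ 0 := by
  intro h
  have h0 := coeff_QPade m 0 w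
  rw [h, coeff_zero, if_pos m.zero_le, pow_zero, one_mul] at h0
  exact mul_ne_zero (pcoef_ne_zero m 0) (sub_ne_zero.mpr hw.symm) h0.symm

lemma eventually_natDegree_QPade_exp (m : ℕ) :
    ∀ᶠ t in 𝓝[≠] (0 : ℂ), (QPade m (Complex.exp t)).natDegree = m := by
  rcases m.even_or_odd with hm | hm
  · filter_upwards [eventually_exp_ne_one] with t ht
    exact natDegree_QPade (by rwa [hm.neg_one_pow, one_mul, sub_ne_zero, ne_comm])
  · have h : ∀ᶠ t in 𝓝 (0 : ℂ), 1 + Complex.exp t ≠ 0 :=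
      (continuous_const.add Complex.continuous_exp).continuousAt.eventually_ne (by norm_num)
    filter_upwards [h.filter_mono nhdsWithin_le_nhds] with t ht
    exact natDegree_QPade (by rwa [hm.neg_one_pow, neg_one_mul, sub_neg_eq_add])

lemma prod_roots_QPade_of_even {m : ℕ} (hm : Even m) {w : ℂ} (hw : w ≠ 1) :
    (QPade m w).roots.prod = pcoef m 0 := by
  have hsub : 1 - w ≠ 0 := sub_ne_zero.mpr hw.symm
  have hdeg : (QPade m w).natDegree = m := natDegree_QPade (by rwa [hm.neg_one_pow, one_mul])
  have hlead : pcoef m m = 1 := by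
    rw [pcoef, Nat.sub_self, show 2 * m - m = m by lia, Nat.factorial_zero, Nat.cast_one, mul_one,
      div_self (Nat.cast_ne_zero.mpr m.factorial_ne_zero)]
  have h := (IsAlgClosed.splits (QPade m w)).coeff_zero_eq_leadingCoeff_mul_prod_roots
  rw [leadingCoeff, hdeg, coeff_QPade, coeff_QPade, if_pos m.zero_le, if_pos le_rfl,
    hm.neg_one_pow, hlead, pow_zero, one_mul] at h
  refine mul_right_cancel₀ hsub ?_
  linear_combination -h

lemma IsRootBranch.eventually_isRoot {m : ℕ} {ζ : ℂ} {z : ℂ → ℂ} (hz : IsRootBranch m ζ z) :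
    ∀ᶠ t in 𝓝 0, (QPade m (Complex.exp t)).IsRoot (z t) := by
  filter_upwards [hz.eventuallyEq, hz.eventually_deriv_mul] with t ht hPD
  rw [IsRoot, eval_QPade, ← ht, Function.comp_apply, Rgauss, div_mul_cancel₀ _ hPD.2.1, sub_self]

section RootsNearOne

variable {m : ℕ} {Z : ℂ → ℂ → ℂ}

lemma eventually_map_le_roots_QPade_exp (hm : m ≠ 0)
    (hZ : ∀ ζ ∈ (QPade m 1).roots, IsRootBranch m ζ (Z ζ)) :
    ∀ᶠ t in 𝓝[≠] 0, (QPade m 1).roots.map (Z · t) ≤ (QPade m (Complex.exp t)).roots := by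
  refine eventually_map_le_roots (nodup_roots_QPade_one hm) (fun ζ hζ => ?_)
    (eventually_exp_ne_one.mono fun _ => QPade_ne_zero)
    fun ζ hζ => (hZ ζ hζ).eventually_isRoot.filter_mono nhdsWithin_le_nhds
  have h := (hZ ζ hζ).analyticAt.continuousAt.tendsto
  rw [(hZ ζ hζ).apply_zero] at h
  exact h.mono_left nhdsWithin_le_nhds

lemma eventually_roots_QPade_exp_of_odd (hm : Odd m)
    (hZ : ∀ ζ ∈ (QPade m 1).roots, IsRootBranch m ζ (Z ζ)) :
    ∀ᶠ t in 𝓝[≠] 0, (QPade m (Complex.exp t)).roots = (QPade m 1).roots.map (Z · t) := by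
  filter_upwards [eventually_map_le_roots_QPade_exp hm.pos.ne' hZ,
    eventually_natDegree_QPade_exp m] with t hle hdeg
  refine (Multiset.eq_of_le_of_card_le hle ?_).symm
  rw [Multiset.card_map, IsAlgClosed.card_roots_eq_natDegree, IsAlgClosed.card_roots_eq_natDegree,
    hdeg, natDegree_QPade_one hm.pos.ne']
  obtain ⟨n, rfl⟩ := hm
  lia

lemma eventually_roots_QPade_exp_of_even (hm : m ≠ 0) (hm' : Even m)
    (hZ : ∀ ζ ∈ (QPade m 1).roots, IsRootBranch m ζ (Z ζ)) :
    ∀ᶠ t in 𝓝[≠] 0, (QPade m (Complex.exp t)).roots =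
      (pcoef m 0 * ((QPade m 1).roots.map (Z · t)).prod⁻¹) ::ₘ (QPade m 1).roots.map (Z · t) := by
  filter_upwards [eventually_map_le_roots_QPade_exp hm hZ,
    eventually_natDegree_QPade_exp m, eventually_exp_ne_one] with t hle hdeg ht
  obtain ⟨u, hu⟩ := Multiset.le_iff_exists_add.mp hle
  obtain ⟨a, rfl⟩ : ∃ a, u = {a} := by
    rw [← Multiset.card_eq_one]
    have h := congrArg Multiset.card hu
    rw [Multiset.card_add, Multiset.card_map, IsAlgClosed.card_roots_eq_natDegree,
      IsAlgClosed.card_roots_eq_natDegree, hdeg, natDegree_QPade_one hm] at h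
    obtain ⟨n, rfl⟩ := hm'
    lia
  have hprod := prod_roots_QPade_of_even hm' ht
  rw [hu, Multiset.prod_add, Multiset.prod_singleton] at hprod
  have h0 : ((QPade m 1).roots.map (Z · t)).prod ≠ 0 := fun h =>
    pcoef_ne_zero m 0 (by rw [← hprod, h, zero_mul])
  rw [hu, ← hprod, mul_comm _ a, mul_inv_cancel_right₀ h0, add_comm, Multiset.singleton_add]

end RootsNearOne

lemma analyticAt_multiset_prod_map {𝕜 A E ι : Type*} [NontriviallyNormedField 𝕜]
    [NormedAddCommGroup E] [NormedSpace 𝕜 E] [NormedCommRing A] [NormedAlgebra 𝕜 A]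
    {s : Multiset ι} {f : ι → E → A} {a : E} (hf : ∀ i ∈ s, AnalyticAt 𝕜 (f i) a) :
    AnalyticAt 𝕜 (fun x => (s.map (f · x)).prod) a := by
  induction s using Multiset.induction_on with
  | empty => simpa using analyticAt_const
  | cons i s ih =>
    simp only [Multiset.map_cons, Multiset.prod_cons]
    exact (hf i (s.mem_cons_self i)).mul (ih fun j hj => hf j (Multiset.mem_cons_of_mem hj))

lemma isBigO_inv_sub_inv_mul {𝕜 : Type*} [NontriviallyNormedField 𝕜] {g : 𝕜 → 𝕜}
    (hg : AnalyticAt 𝕜 g 0) (h0 : g 0 = 0) (h' : deriv g 0 ≠ 0) :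
    (fun t => (g t)⁻¹ - (deriv g 0 * t)⁻¹) =O[𝓝[≠] 0] fun _ => (1 : 𝕜) := by
  obtain ⟨p, hp⟩ := hg
  have hd : DifferentiableAt 𝕜 (fun t => (dslope g 0 t)⁻¹) 0 :=
    hp.has_fpower_series_dslope_fslope.differentiableAt.inv (by rwa [dslope_same])
  have h := (hd.isBigO_sub.mono nhdsWithin_le_nhds).mul
    (isBigO_refl (fun t : 𝕜 => t⁻¹) (𝓝[≠] 0))
  refine h.congr' ?_ ?_
  · filter_upwards with t
    have hgt : g t = t * dslope g 0 t := by simpa [h0] using (sub_smul_dslope g 0 t).symm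
    rw [hgt, dslope_same, mul_inv, mul_inv]
    ring
  · filter_upwards [self_mem_nhdsWithin] with t ht
    rw [sub_zero, mul_inv_cancel₀ ht]

lemma IsRootBranch.deriv_zero_of_zero {m : ℕ} (hm : m ≠ 0) {z : ℂ → ℂ}
    (hz : IsRootBranch m 0 z) : deriv z 0 = 1 := by
  have hz' : IsRootBranch m ((0 : ℝ) * I) z := by simpa using hz
  rw [hz'.deriv_zero, gaussRate_zero hm, ofReal_one, inv_one]

lemma isBigO_inv_prod_branches {m : ℕ} (hm : m ≠ 0) {s : Multiset ℂ} (hs : 0 ∉ s) {Z : ℂ → ℂ → ℂ}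
    (hZ : ∀ ζ ∈ 0 ::ₘ s, IsRootBranch m ζ (Z ζ)) :
    (fun t => (((0 ::ₘ s).map (Z · t)).prod)⁻¹ - (s.prod * t)⁻¹) =O[𝓝[≠] 0] fun _ => (1 : ℂ) := by
  have hZ0 := hZ 0 (s.mem_cons_self 0)
  have hZs : ∀ ζ ∈ s, IsRootBranch m ζ (Z ζ) := fun ζ hζ => hZ ζ (Multiset.mem_cons_of_mem hζ)
  set h : ℂ → ℂ := fun t => (s.map (Z · t)).prod
  have hha : AnalyticAt ℂ h 0 := analyticAt_multiset_prod_map fun ζ hζ => (hZs ζ hζ).analyticAt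
  have hh0 : h 0 = s.prod := by
    change (s.map (Z · 0)).prod = s.prod
    rw [Multiset.map_congr rfl fun ζ hζ => (hZs ζ hζ).apply_zero, Multiset.map_id']
  have hderiv : deriv (Z 0 * h) 0 = s.prod := by
    rw [deriv_mul hZ0.analyticAt.differentiableAt hha.differentiableAt,
      hZ0.deriv_zero_of_zero hm, hZ0.apply_zero, hh0, one_mul, zero_mul, add_zero]
  have hbigO := isBigO_inv_sub_inv_mul (hZ0.analyticAt.mul hha)
    (by rw [Pi.mul_apply, hZ0.apply_zero, zero_mul])
    (by rw [hderiv]; exact Multiset.prod_ne_zero hs)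
  rw [hderiv] at hbigO
  refine hbigO.congr_left fun t => ?_
  rw [Multiset.map_cons, Multiset.prod_cons, Pi.mul_apply]

lemma pcoef_zero_right (m : ℕ) :
    pcoef m 0 = (((2 * m).factorial / m.factorial : ℝ) : ℂ) := by
  simp [pcoef]

lemma isBigO_escaping_root_sub {m k : ℕ} (hm : m ≠ 0) {r : Fin k → ℝ}
    (hroots : (QPade m 1).roots = 0 ::ₘ conjPairs r) {Z : ℂ → ℂ → ℂ}
    (hZ : ∀ ζ ∈ (QPade m 1).roots, IsRootBranch m ζ (Z ζ)) :
    (fun t => pcoef m 0 * (((QPade m 1).roots.map (Z · t)).prod)⁻¹ -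
      (((2 * m).factorial / m.factorial / ∏ ℓ, r ℓ ^ 2 : ℝ) : ℂ) / t) =O[𝓝[≠] 0]
        fun _ => (1 : ℂ) := by
  have hnodup := nodup_roots_QPade_one hm
  rw [hroots] at hnodup hZ ⊢
  have h := (isBigO_inv_prod_branches hm (Multiset.nodup_cons.mp hnodup).1 hZ).const_mul_left
    (pcoef m 0)
  refine h.congr_left fun t => ?_
  rw [prod_conjPairs, mul_sub, pcoef_zero_right, ← div_eq_mul_inv _ (_ * t),
    ← div_div, ← ofReal_div]

theorem pade_solutions_theta_zero (m : ℕ) (hm : 1 ≤ m) :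
    ∃ (r : Fin ((m + 1) / 2 - 1) → ℝ) (z1 : ℂ → ℂ)
      (zp zn : Fin ((m + 1) / 2 - 1) → ℂ → ℂ) (δ : Fin ((m + 1) / 2 - 1) → ℝ),
      (∀ ℓ, r ℓ ≠ 0) ∧
      (MgaussPoly m 0).roots
        = 0 ::ₘ (Multiset.map (fun ℓ => (r ℓ : ℂ) * Complex.I) Finset.univ.val
            + Multiset.map (fun ℓ => -((r ℓ : ℂ) * Complex.I)) Finset.univ.val) ∧
      (∀ᶠ t : ℂ in 𝓝[≠] (0 : ℂ), Rgauss m (z1 t) = Complex.exp t) ∧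
      ((fun t : ℂ => z1 t - t) =O[𝓝 (0 : ℂ)] fun t : ℂ => t ^ (2 * m + 1)) ∧
      (∀ ℓ, 1 < δ ℓ ∧
        (∀ᶠ t : ℂ in 𝓝[≠] (0 : ℂ),
          Rgauss m (zp ℓ t) = Complex.exp t ∧ Rgauss m (zn ℓ t) = Complex.exp t) ∧
        ((fun t : ℂ => zp ℓ t - ((r ℓ : ℂ) * Complex.I + (δ ℓ : ℂ) * t))
          =O[𝓝 (0 : ℂ)] fun t : ℂ => t ^ 2) ∧
        ((fun t : ℂ => zn ℓ t - (-((r ℓ : ℂ) * Complex.I) + (δ ℓ : ℂ) * t))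
          =O[𝓝 (0 : ℂ)] fun t : ℂ => t ^ 2)) ∧
      (Odd m →
        ∀ᶠ t : ℂ in 𝓝[≠] (0 : ℂ),
          (QPade m (Complex.exp t)).roots
            = z1 t ::ₘ (Multiset.map (fun ℓ => zp ℓ t) Finset.univ.val
                + Multiset.map (fun ℓ => zn ℓ t) Finset.univ.val)) ∧
      (Even m → ∃ (zlast : ℂ → ℂ) (Dm : ℝ),
        Dm = (((2 * m).factorial : ℝ) / (m.factorial : ℝ)) / ∏ ℓ, (r ℓ) ^ 2 ∧
        0 < Dm ∧
        (∀ᶠ t : ℂ in 𝓝[≠] (0 : ℂ),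
          (QPade m (Complex.exp t)).roots
            = z1 t ::ₘ zlast t ::ₘ (Multiset.map (fun ℓ => zp ℓ t) Finset.univ.val
                + Multiset.map (fun ℓ => zn ℓ t) Finset.univ.val)) ∧
        ((fun t : ℂ => zlast t - (Dm : ℂ) / t)
          =O[𝓝[≠] (0 : ℂ)] fun _ : ℂ => (1 : ℂ))) := by
  have hm' : m ≠ 0 := Nat.one_le_iff_ne_zero.mp hm
  obtain ⟨r, hr, hroots⟩ := exists_roots_QPade_one_eq hm'
  choose! Z hZ using fun ζ (hζ : ζ ∈ (QPade m 1).roots) => exists_isRootBranch hm' hζ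
  have hZ0 : IsRootBranch m 0 (Z 0) := hZ 0 (by simp [hroots])
  have hZp ℓ : IsRootBranch m (r ℓ * I) (Z (r ℓ * I)) := hZ _ (by simp [hroots, conjPairs])
  have hZn ℓ : IsRootBranch m ((-r ℓ : ℝ) * I) (Z (-(r ℓ * I))) := by
    simpa using hZ (-(r ℓ * I)) (by simp [hroots, conjPairs])
  refine ⟨r, Z 0, fun ℓ => Z (r ℓ * I), fun ℓ => Z (-(r ℓ * I)), fun ℓ => (gaussRate m (r ℓ))⁻¹,
    fun ℓ => (hr ℓ).ne', (congrArg roots (MgaussPoly_zero_right m)).trans hroots,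
    hZ0.eventuallyEq.filter_mono nhdsWithin_le_nhds, hZ0.isBigO_sub_id,
    fun ℓ => ⟨(one_lt_inv₀ (gaussRate_pos hm' _)).mpr (gaussRate_lt_one hm' (hr ℓ).ne'),
      ((hZp ℓ).eventuallyEq.and (hZn ℓ).eventuallyEq).filter_mono nhdsWithin_le_nhds,
      (hZp ℓ).isBigO_sub, by simpa [gaussRate_neg] using (hZn ℓ).isBigO_sub⟩,
    fun hodd => ?_, fun heven => ⟨_, _, rfl,
      div_pos (by positivity) (Finset.prod_pos fun ℓ _ => pow_pos (hr ℓ) 2), ?_,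
      isBigO_escaping_root_sub hm' hroots hZ⟩⟩
  · filter_upwards [eventually_roots_QPade_exp_of_odd hodd hZ] with t ht
    rw [ht, hroots, Multiset.map_cons, map_conjPairs]
  · filter_upwards [eventually_roots_QPade_exp_of_even hm' heven hZ] with t ht
    rw [ht, Multiset.cons_swap, hroots, Multiset.map_cons, map_conjPairs]
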